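/- Let m ≥ 2 and let μ be a probability measure on the closed ball B_r(0) ⊂ ℝ^m invariant under rotations about the origin, and let α > r. For z ∈ B_r(0) define H^{(α,μ,m)}(z) := ∫_{B_r(0)}(α − ‖x‖) dμ(x) − ∫_{B_α(z) ∩ B_r(0)}(α − d(z,x)) dμ(x). Then H^{(α,μ,m)}(z) ≥ T^{(α,m)}(z), where T^{(α,m)} is the analogous quantity with μ replaced by the uniform measure μ^r on the sphere of radius r. -/

import Mathlib

open MeasureTheory Metric Real
open scoped ENNReal

/-- The uniform probability measure on the sphere of radius `s` centered at the origin
in `ℝ^m`; for `s = 0` it is the Dirac measure at the origin. -/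
noncomputable def sphereUniform (m : ℕ) (s : ℝ) : Measure (EuclideanSpace ℝ (Fin m)) :=
  if s = 0 then Measure.dirac 0
  else (μH[(m : ℝ) - 1] (sphere (0 : EuclideanSpace ℝ (Fin m)) s))⁻¹ •
    (μH[(m : ℝ) - 1]).restrict (sphere (0 : EuclideanSpace ℝ (Fin m)) s)

/-- `H^{(α,μ,m)}(z) = ∫_{B_r(0)}(α − ‖x‖) dμ(x) − ∫_{B_α(z) ∩ B_r(0)}(α − d(z,x)) dμ(x)`. -/
noncomputable def Hfun (m : ℕ) (α r : ℝ) (μ : Measure (EuclideanSpace ℝ (Fin m)))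
    (z : EuclideanSpace ℝ (Fin m)) : ℝ :=
  (∫ x in closedBall (0 : EuclideanSpace ℝ (Fin m)) r, (α - ‖x‖) ∂μ) -
    ∫ x in closedBall z α ∩ closedBall (0 : EuclideanSpace ℝ (Fin m)) r,
      (α - dist z x) ∂μ

/-- `T^{(α,m)}` is `H^{(α,μ,m)}` with `μ` the uniform measure on the radius-`r` sphere. -/
noncomputable def Tfun (m : ℕ) (α r : ℝ) (z : EuclideanSpace ℝ (Fin m)) : ℝ :=
  Hfun m α r (sphereUniform m r) z

open Module

lemma sphere_hausdorff_finite_pos (m : ℕ) (hm : 2 ≤ m) (r : ℝ) (hr : 0 < r) :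
    μH[(m : ℝ) - 1] (sphere (0 : EuclideanSpace ℝ (Fin m)) r) ≠ 0 ∧
    μH[(m : ℝ) - 1] (sphere (0 : EuclideanSpace ℝ (Fin m)) r) ≠ ∞ := by
  obtain ⟨n, rfl⟩ : ∃ n, m = n + 1 := ⟨m - 1, by omega⟩
  have hd : ((n + 1 : ℕ) : ℝ) - 1 = (n : ℝ) := by push_cast; ring
  rw [hd]
  have hn0 : (0 : ℝ) ≤ n := Nat.cast_nonneg n
  have : Fact (finrank ℝ (EuclideanSpace ℝ (Fin (n + 1))) = n + 1) := ⟨by simp⟩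
  have haar : ∀ v : EuclideanSpace ℝ (Fin (n + 1)), v ≠ 0 →
      Measure.IsAddHaarMeasure (G := (ℝ ∙ v)ᗮ) μH[(n : ℝ)] := by
    intro v hv
    have h := isAddHaarMeasure_hausdorffMeasure (E := (ℝ ∙ v)ᗮ)
    rwa [Submodule.finrank_orthogonal_span_singleton (n := n) hv] at h
  let e : EuclideanSpace ℝ (Fin (n + 1)) := EuclideanSpace.single 0 1
  have he : ‖e‖ = 1 := by simp [e]
  have he0 : e ≠ 0 := by
    intro h; rw [h] at he; simp at he
  constructor
  · have h1 := hausdorffMeasure_orthogonalProjectionOnto_le (ℝ ∙ e)ᗮ (n : ℝ)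
      (sphere (0 : EuclideanSpace ℝ (Fin (n + 1))) r) hn0
    have h2 : ball (0 : (ℝ ∙ e)ᗮ) r ⊆ (ℝ ∙ e)ᗮ.orthogonalProjectionOnto ''
        (sphere (0 : EuclideanSpace ℝ (Fin (n + 1))) r) := by
      intro w hw
      have hw' : ‖w‖ < r := by simpa using hw
      have horth : inner ℝ (w : EuclideanSpace ℝ (Fin (n + 1))) e = 0 :=
        (Submodule.mem_orthogonal_singleton_iff_inner_left).1 w.2
      refine ⟨(w : EuclideanSpace ℝ (Fin (n + 1))) + √(r ^ 2 - ‖w‖ ^ 2) • e, ?_, ?_⟩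
      · rw [mem_sphere_zero_iff_norm]
        have hnn : 0 ≤ r ^ 2 - ‖w‖ ^ 2 := by nlinarith [norm_nonneg w]
        have h3 : ‖(w : EuclideanSpace ℝ (Fin (n + 1))) + √(r ^ 2 - ‖w‖ ^ 2) • e‖ ^ 2 = r ^ 2 := by
          rw [norm_add_sq_real, inner_smul_right, horth, norm_smul, he, mul_one, Real.norm_eq_abs,
            sq_abs, Real.sq_sqrt hnn]
          simp
        exact (pow_left_inj₀ (norm_nonneg _) hr.le two_ne_zero).1 h3
      · rw [map_add, map_smul]
        simp only [Submodule.orthogonalProjectionOnto_mem_subspace_eq_self]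
        rw [Submodule.orthogonalProjectionOnto_orthogonalComplement_singleton_eq_zero]
        simp
    have h4 : 0 < (μH[(n : ℝ)] : Measure (ℝ ∙ e)ᗮ) (ball 0 r) := by
      have := haar e he0
      exact measure_ball_pos _ _ hr
    exact (h4.trans_le ((measure_mono h2).trans h1)).ne'
  · have key : ∀ v : EuclideanSpace ℝ (Fin (n + 1)), ‖v‖ = 1 →
        μH[(n : ℝ)] ((fun w : (ℝ ∙ v)ᗮ => r • stereoInvFunAux v (w : EuclideanSpace ℝ (Fin (n + 1))))
          '' closedBall 0 2) < ∞ := by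
      intro v hv
      have hv0 : v ≠ 0 := by
        intro h; rw [h] at hv; simp at hv
      have hc : ContDiff ℝ 1 (fun w : (ℝ ∙ v)ᗮ =>
          r • stereoInvFunAux v (w : EuclideanSpace ℝ (Fin (n + 1)))) :=
        (contDiff_stereoInvFunAux.comp (ℝ ∙ v)ᗮ.subtypeL.contDiff).const_smul r
      obtain ⟨K, hK⟩ := (hc.locallyLipschitz.locallyLipschitzOn
        (s := closedBall 0 2)).exists_lipschitzOnWith_of_compact (isCompact_closedBall _ _)
      refine (hK.hausdorffMeasure_image_le hn0).trans_lt ?_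
      have := haar v hv0
      refine ENNReal.mul_lt_top ?_ (isCompact_closedBall _ _).measure_lt_top
      exact ENNReal.rpow_lt_top_of_nonneg hn0 ENNReal.coe_ne_top
    have cov : ∀ v : EuclideanSpace ℝ (Fin (n + 1)), ‖v‖ = 1 →
        ∀ x : EuclideanSpace ℝ (Fin (n + 1)), ‖x‖ = r → inner ℝ v x ≤ 0 →
        x ∈ ((fun w : (ℝ ∙ v)ᗮ => r • stereoInvFunAux v (w : EuclideanSpace ℝ (Fin (n + 1))))
          '' closedBall 0 2) := by
      intro v hv x hx hvx
      have hu : ‖r⁻¹ • x‖ = 1 := by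
        rw [norm_smul, hx, Real.norm_eq_abs, abs_of_pos (inv_pos.2 hr), inv_mul_cancel₀ hr.ne']
      let u : sphere (0 : EuclideanSpace ℝ (Fin (n + 1))) 1 := ⟨r⁻¹ • x, by simpa using hu⟩
      have hvu : inner ℝ v (r⁻¹ • x) ≤ 0 := by
        rw [inner_smul_right]
        exact mul_nonpos_of_nonneg_of_nonpos (inv_pos.2 hr).le hvx
      have hne : (u : EuclideanSpace ℝ (Fin (n + 1))) ≠ v := by
        intro h
        change r⁻¹ • x = v at h
        rw [h, real_inner_self_eq_norm_sq, hv] at hvu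
        norm_num at hvu
      refine ⟨stereoToFun v u, ?_, ?_⟩
      · rw [mem_closedBall_zero_iff, stereoToFun_apply, norm_smul]
        have h1 : ‖(ℝ ∙ v)ᗮ.orthogonalProjectionOnto (r⁻¹ • x)‖ ≤ 1 :=
          (Submodule.norm_orthogonalProjectionOnto_apply_le _ _).trans hu.le
        have h2 : ‖2 / ((1 : ℝ) - innerSL ℝ v (r⁻¹ • x))‖ ≤ 2 := by
          rw [innerSL_apply_apply, Real.norm_eq_abs, abs_of_nonneg (by apply div_nonneg <;> linarith),
            div_le_iff₀ (by linarith)]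
          linarith
        calc _ ≤ (2 : ℝ) * 1 := mul_le_mul h2 h1 (norm_nonneg _) (by norm_num)
          _ = 2 := by norm_num
      · have h := congrArg Subtype.val (stereo_left_inv hv hne)
        change r • ((stereoInvFun hv (stereoToFun v u) : sphere (0 : EuclideanSpace ℝ (Fin (n + 1))) 1)
          : EuclideanSpace ℝ (Fin (n + 1))) = x
        rw [h]
        change r • (r⁻¹ • x) = x
        rw [smul_inv_smul₀ hr.ne']
    have he' : ‖-e‖ = 1 := by rw [norm_neg, he]
    refine ne_of_lt (lt_of_le_of_lt (measure_mono ?_)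
      ((measure_union_le _ _).trans_lt (ENNReal.add_lt_top.2 ⟨key e he, key (-e) he'⟩)))
    intro x hx
    rw [mem_sphere_zero_iff_norm] at hx
    rcases le_total (inner ℝ e x) 0 with h | h
    · exact Or.inl (cov e he x hx h)
    · exact Or.inr (cov (-e) he' x hx (by rw [inner_neg_left]; linarith))

lemma sphereUniform_props (m : ℕ) (hm : 2 ≤ m) (r : ℝ) (hr : 0 < r) :
    IsProbabilityMeasure (sphereUniform m r) ∧
    (∀ᵐ x ∂(sphereUniform m r), ‖x‖ = r) ∧
    ∀ R : EuclideanSpace ℝ (Fin m) ≃ₗᵢ[ℝ] EuclideanSpace ℝ (Fin m),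
      (sphereUniform m r).map R = sphereUniform m r := by
  obtain ⟨h0, ht⟩ := sphere_hausdorff_finite_pos m hm r hr
  rw [sphereUniform, if_neg hr.ne']
  refine ⟨⟨?_⟩, ?_, ?_⟩
  · rw [Measure.smul_apply, Measure.restrict_apply_univ, smul_eq_mul, ENNReal.inv_mul_cancel h0 ht]
  · refine Measure.ae_smul_measure ?_ _
    filter_upwards [ae_restrict_mem isClosed_sphere.measurableSet] with x hx
    simpa using hx
  · intro R
    rw [Measure.map_smul]
    congr 1
    have h := (R.toIsometryEquiv.measurePreserving_hausdorffMeasure ((m : ℝ) - 1)).restrict_preimage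
      (isClosed_sphere (x := (0 : EuclideanSpace ℝ (Fin m))) (ε := r)).measurableSet
    have h2 : R.toIsometryEquiv ⁻¹' (sphere (0 : EuclideanSpace ℝ (Fin m)) r) = sphere 0 r := by
      ext x
      simp
    rw [h2] at h
    exact h.map_eq

/-- The bounded continuous integrand. -/
noncomputable def Fint (m : ℕ) (α r : ℝ) (z x : EuclideanSpace ℝ (Fin m)) : ℝ :=
  min (dist z x) α - min ‖x‖ r

lemma Fint_bound (m : ℕ) (α r : ℝ) (hr : 0 < r) (hα : r < α) (z x : EuclideanSpace ℝ (Fin m)) :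
    ‖Fint m α r z x‖ ≤ α + r := by
  unfold Fint
  have h1 : 0 ≤ min (dist z x) α := le_min dist_nonneg (by linarith)
  have h2 : 0 ≤ min ‖x‖ r := le_min (norm_nonneg _) hr.le
  have h3 := min_le_right (dist z x) α
  have h4 := min_le_right ‖x‖ r
  rw [Real.norm_eq_abs, abs_le]
  constructor <;> linarith

lemma Hfun_eq (m : ℕ) (α r : ℝ) (ρ : Measure (EuclideanSpace ℝ (Fin m)))
    [IsProbabilityMeasure ρ] (hs : ∀ᵐ x ∂ρ, ‖x‖ ≤ r) (z : EuclideanSpace ℝ (Fin m)) :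
    Hfun m α r ρ z = ∫ x, Fint m α r z x ∂ρ := by
  unfold Hfun
  have hres : ρ.restrict (closedBall (0 : EuclideanSpace ℝ (Fin m)) r) = ρ := by
    refine Measure.restrict_eq_self_of_ae_mem ?_
    filter_upwards [hs] with x hx
    simpa using hx
  have hint : ∀ g : EuclideanSpace ℝ (Fin m) → ℝ, Continuous g → Integrable g ρ := by
    intro g hg
    have := hg.continuousOn.integrableOn_compact (μ := ρ)
      (isCompact_closedBall (0 : EuclideanSpace ℝ (Fin m)) r)
    rwa [IntegrableOn, hres] at this
  rw [← Measure.restrict_restrict isClosed_closedBall.measurableSet, hres,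
    ← integral_indicator isClosed_closedBall.measurableSet]
  have hind : (closedBall z α).indicator (fun x => α - dist z x)
      = fun x => max (α - dist z x) 0 := by
    ext x
    by_cases hx : x ∈ closedBall z α
    · rw [Set.indicator_of_mem hx, max_eq_left]
      rw [mem_closedBall, dist_comm] at hx
      linarith
    · rw [Set.indicator_of_notMem hx, max_eq_right]
      rw [mem_closedBall, dist_comm] at hx
      linarith
  rw [hind, ← integral_sub (hint _ (by fun_prop)) (hint _ (by fun_prop))]
  refine integral_congr_ae ?_
  filter_upwards [hs] with x hx
  simp only [Fint, min_eq_left hx]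
  rcases le_total (dist z x) α with h | h
  · rw [max_eq_left (by linarith), min_eq_left h]; ring
  · rw [max_eq_right (by linarith), min_eq_right h]; ring

lemma Fint_rot (m : ℕ) (α r : ℝ) (ρ : Measure (EuclideanSpace ℝ (Fin m)))
    (hrot : ∀ R : EuclideanSpace ℝ (Fin m) ≃ₗᵢ[ℝ] EuclideanSpace ℝ (Fin m), ρ.map R = ρ)
    (z w : EuclideanSpace ℝ (Fin m)) (h : ‖z‖ = ‖w‖) :
    ∫ x, Fint m α r w x ∂ρ = ∫ x, Fint m α r z x ∂ρ := by
  let R := Submodule.reflection (ℝ ∙ (z - w))ᗮ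
  have hR : R z = w := Submodule.reflection_sub h
  have hc : Continuous (fun x => Fint m α r w x) := by unfold Fint; fun_prop
  conv_lhs => rw [← hrot R]
  rw [integral_map R.continuous.aemeasurable hc.aestronglyMeasurable]
  congr 1
  ext x
  simp only [Fint]
  rw [← hR, R.dist_map, R.norm_map]

lemma Fint_mono (m : ℕ) (hm : 2 ≤ m) (α r : ℝ) (hr : 0 < r)
    (x : EuclideanSpace ℝ (Fin m)) (hx : ‖x‖ ≤ r) :
    ∃ x' : EuclideanSpace ℝ (Fin m), ‖x'‖ = r ∧ ∀ w, Fint m α r w x' ≤ Fint m α r w x := by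
  obtain ⟨x', h1, h2⟩ : ∃ x' : EuclideanSpace ℝ (Fin m), ‖x'‖ = r ∧ dist x x' = r - ‖x‖ := by
    by_cases h0 : x = 0
    · refine ⟨EuclideanSpace.single ⟨0, by omega⟩ r, ?_, ?_⟩
      · simp [abs_of_pos hr]
      · simp [h0, abs_of_pos hr]
    · have hp : 0 < ‖x‖ := norm_pos_iff.2 h0
      refine ⟨(r / ‖x‖) • x, ?_, ?_⟩
      · rw [norm_smul, Real.norm_eq_abs, abs_of_pos (by positivity)]
        field_simp
      · have : x - (r / ‖x‖) • x = (1 - r / ‖x‖) • x := by rw [sub_smul, one_smul]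
        rw [dist_eq_norm, this, norm_smul, Real.norm_eq_abs, abs_of_nonpos]
        · field_simp; ring
        · rw [sub_nonpos, le_div_iff₀ hp]; linarith
  refine ⟨x', h1, fun w => ?_⟩
  unfold Fint
  rw [h1, min_self, min_eq_left hx]
  have := dist_triangle w x x'
  rcases le_total (dist w x) α with h | h
  · rw [min_eq_left h]
    have := min_le_left (dist w x') α
    linarith
  · rw [min_eq_right h]
    have := min_le_right (dist w x') α
    linarith

lemma Fint_symm (m : ℕ) (α r t : ℝ) (x y : EuclideanSpace ℝ (Fin m))
    (hx : ‖x‖ = r) (hy : ‖y‖ = r) : Fint m α r (t • y) x = Fint m α r (t • x) y := by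
  unfold Fint
  rw [hx, hy]
  have : dist (t • y) x = dist (t • x) y := by
    rw [dist_eq_norm, dist_eq_norm]
    refine (pow_left_inj₀ (norm_nonneg _) (norm_nonneg _) two_ne_zero).1 ?_
    rw [norm_sub_sq_real, norm_sub_sq_real, norm_smul, norm_smul, hx, hy, inner_smul_left,
      inner_smul_left, real_inner_comm]
  rw [this]

/-- For `m ≥ 2`, `μ` a rotation-invariant probability measure on `B_r(0) ⊂ ℝ^m` and
`α > r`, one has `H^{(α,μ,m)}(z) ≥ T^{(α,m)}(z)` for every `z ∈ B_r(0)`. -/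
theorem stmt12 (m : ℕ) (hm : 2 ≤ m) (r α : ℝ) (hr : 0 < r) (hα : r < α)
    (μ : Measure (EuclideanSpace ℝ (Fin m))) [IsProbabilityMeasure μ]
    (hsupp : μ (closedBall 0 r) = 1)
    (hrot : ∀ R : EuclideanSpace ℝ (Fin m) ≃ₗᵢ[ℝ] EuclideanSpace ℝ (Fin m),
      μ.map R = μ)
    (z : EuclideanSpace ℝ (Fin m)) (hz : z ∈ closedBall (0 : EuclideanSpace ℝ (Fin m)) r) :
    Tfun m α r z ≤ Hfun m α r μ z := by
  obtain ⟨hP, hS, hνrot⟩ := sphereUniform_props m hm r hr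
  have hSle : ∀ᵐ x ∂(sphereUniform m r), ‖x‖ ≤ r := by
    filter_upwards [hS] with x hx using hx.le
  have hμ : ∀ᵐ x ∂μ, ‖x‖ ≤ r := by
    have h := (prob_compl_eq_zero_iff isClosed_closedBall.measurableSet).2 hsupp
    filter_upwards [compl_mem_ae_iff.2 h] with x hx
    simpa using hx
  rw [Tfun, Hfun_eq m α r _ hSle, Hfun_eq m α r μ hμ]
  generalize sphereUniform m r = ν at *
  have hnorm : ∀ y : EuclideanSpace ℝ (Fin m), ‖y‖ = r → ‖z‖ = ‖(‖z‖ / r) • y‖ := by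
    intro y hy
    rw [norm_smul, hy, Real.norm_eq_abs, abs_of_nonneg (by positivity)]
    field_simp
  have hcont : Continuous (fun p : EuclideanSpace ℝ (Fin m) × EuclideanSpace ℝ (Fin m) =>
      Fint m α r ((‖z‖ / r) • p.1) p.2) := by unfold Fint; fun_prop
  have hint2 : Integrable (fun p : EuclideanSpace ℝ (Fin m) × EuclideanSpace ℝ (Fin m) =>
      Fint m α r ((‖z‖ / r) • p.1) p.2) (ν.prod μ) :=
    Integrable.of_bound hcont.aestronglyMeasurable (α + r)
      (Filter.Eventually.of_forall fun p => Fint_bound m α r hr hα _ _)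
  have e1 : ∫ x, Fint m α r z x ∂μ = ∫ y, ∫ x, Fint m α r ((‖z‖ / r) • y) x ∂μ ∂ν := by
    have : ∀ᵐ y ∂ν, ∫ x, Fint m α r ((‖z‖ / r) • y) x ∂μ = ∫ x, Fint m α r z x ∂μ := by
      filter_upwards [hS] with y hy using Fint_rot m α r μ hrot z _ (hnorm y hy)
    rw [integral_congr_ae this]
    simp
  rw [e1, integral_integral_swap hint2]
  have e2 : ∫ x, Fint m α r z x ∂ν = ∫ _x, (∫ x, Fint m α r z x ∂ν) ∂μ := by simp
  rw [e2]
  refine integral_mono_ae (integrable_const _) hint2.integral_prod_right ?_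
  filter_upwards [hμ] with x hx
  obtain ⟨x', hx', hle⟩ := Fint_mono m hm α r hr x hx
  have hi : ∀ u : EuclideanSpace ℝ (Fin m), Integrable (fun y => Fint m α r ((‖z‖ / r) • y) u) ν :=
    fun u => Integrable.of_bound
      (hcont.comp (continuous_id.prodMk continuous_const)).aestronglyMeasurable (α + r)
      (Filter.Eventually.of_forall fun p => Fint_bound m α r hr hα _ _)
  calc ∫ y, Fint m α r z y ∂ν = ∫ y, Fint m α r ((‖z‖ / r) • x') y ∂ν :=
        (Fint_rot m α r ν hνrot z _ (hnorm x' hx')).symm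
    _ = ∫ y, Fint m α r ((‖z‖ / r) • y) x' ∂ν := by
        refine integral_congr_ae ?_
        filter_upwards [hS] with y hy
        exact (Fint_symm m α r _ x' y hx' hy).symm
    _ ≤ ∫ y, Fint m α r ((‖z‖ / r) • y) x ∂ν :=
        integral_mono (hi x') (hi x) (fun y => hle _)
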